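/- arXiv:2604.23021 — 3 statements merged into one kernel-verified Lean document; each statement's English description precedes it below -/
import Mathlib

section
/- Let β ≥ 4 be a real number and c ≥ 8 a real number. There exists n₀ (depending on β and c) such that for every integer n ≥ n₀ and every positive integer m with m = βn/log n, if n balls are thrown independently and uniformly at random into m bins and X₀ denotes the number of empty bins, then Pr[(β/4)·n^{1−1/β}/log n ≤ X₀ ≤ 2β·n^{1−1/β}/log n] ≥ 1 − n^{−c}. -/
/-!
Put `μ = β n^{1-1/β} / log n`, which equals `m e^{-n/m}` because `m = β n / log n`. The mean of `X₀`
is exactly `m (1 - 1/m)^n` (`sum_emptyBins`), and since `e^{-x} (1 - x²) ≤ 1 - x ≤ e^{-x}` it lies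
in `[μ/2, μ]` once `2n ≤ m²`. Hence failure of the event forces `X₀` to deviate from its mean by at
least `μ/4`.

Moving one ball changes `X₀` by at most `1` (`emptyBins_le_add_one`), so a bounded-differences
inequality applies. Its exponential-moment form (`sum_exp_le`) is proved by induction on the number
of balls, averaging over one ball at a time, and gives the tail bound `exp (-t²/(4n))` on each side
(`card_deviation_le`). With `t = μ/4` and `μ ≥ 4 n^{3/4} / log n` (this is where `β ≥ 4` enters), the
exponent is at least `n^{1/2} / (4 log² n)`, which eventually exceeds `(c + 1) log n`.
-/

open scoped Classical

/-- The number of empty bins when the `n` balls land in bins according to `ω`. -/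
def emptyBins (n m : ℕ) (ω : Fin n → Fin m) : ℕ :=
  (Finset.univ.filter fun j : Fin m => ∀ i, ω i ≠ j).card

/-- One-variable Hoeffding-type bound: a function on `m` equiprobable points with oscillation at
most `1` has centred exponential moment at most `exp (s²)`. It follows from
`exp y ≤ 1 + y + y²` for `|y| ≤ 1`, whose linear term averages out. -/
lemma sum_exp_le_one_step {m : ℕ} (hm : 0 < m) (g : Fin m → ℝ) (s : ℝ) (hs : |s| ≤ 1)
    (hg : ∀ x y, g x - g y ≤ 1) :
    ∑ x, Real.exp (s * g x) ≤ m * Real.exp (s * ((∑ x, g x) / m) + s ^ 2) := by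
  have hm' : (0 : ℝ) < m := by exact_mod_cast hm
  set a := (∑ x, g x) / m with ha
  have hsum : ∑ x, g x = m * a := by rw [ha]; field_simp
  have hdev : ∀ x, |g x - a| ≤ 1 := by
    intro x
    have h1 : ∑ y, (g x - g y) ≤ ∑ _y : Fin m, (1 : ℝ) := Finset.sum_le_sum fun y _ => hg x y
    have h2 : ∑ y, (g y - g x) ≤ ∑ _y : Fin m, (1 : ℝ) := Finset.sum_le_sum fun y _ => hg y x
    simp only [Finset.sum_sub_distrib, Finset.sum_const, Finset.card_univ, Fintype.card_fin,
      nsmul_eq_mul, mul_one, hsum] at h1 h2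
    rw [abs_le]
    constructor <;> nlinarith
  have key : ∀ x, Real.exp (s * g x) ≤ Real.exp (s * a) * (1 + s * (g x - a) + s ^ 2) := by
    intro x
    have hy : |s * (g x - a)| ≤ 1 := by
      rw [abs_mul]; exact mul_le_one₀ hs (abs_nonneg _) (hdev x)
    have h1 := (abs_le.1 (Real.abs_exp_sub_one_sub_id_le hy)).2
    have h2 : (g x - a) ^ 2 ≤ 1 := by
      rw [← sq_abs]; exact pow_le_one₀ (abs_nonneg _) (hdev x)
    have h3 : (s * (g x - a)) ^ 2 ≤ s ^ 2 := by
      rw [mul_pow]; nlinarith [sq_nonneg s]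
    have : s * g x = s * a + s * (g x - a) := by ring
    rw [this, Real.exp_add]
    exact mul_le_mul_of_nonneg_left (by linarith) (Real.exp_pos _).le
  calc ∑ x, Real.exp (s * g x)
      ≤ ∑ x, Real.exp (s * a) * (1 + s * (g x - a) + s ^ 2) := Finset.sum_le_sum fun x _ => key x
    _ = m * (Real.exp (s * a) * (s ^ 2 + 1)) := by
        rw [← Finset.mul_sum, Finset.sum_add_distrib, Finset.sum_add_distrib, ← Finset.mul_sum,
          Finset.sum_sub_distrib, hsum]
        simp
        ring
    _ ≤ m * Real.exp (s * a + s ^ 2) := by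
        rw [Real.exp_add]
        have := Real.add_one_le_exp (s ^ 2)
        gcongr

lemma sum_cons {n m : ℕ} (F : (Fin (n + 1) → Fin m) → ℝ) :
    ∑ ω, F ω = ∑ x : Fin m, ∑ ω : Fin n → Fin m, F (Fin.cons x ω) := by
  rw [← Fintype.sum_prod_type']
  exact (Equiv.sum_comp (Fin.consEquiv fun _ => Fin m) F).symm

/-- Exponential-moment form of the bounded-differences inequality for functions of `n` independent
uniform choices which change by at most `1` when a single choice is changed. -/
lemma sum_exp_le {m : ℕ} (hm : 0 < m) (s : ℝ) (hs : |s| ≤ 1) (n : ℕ) :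
    ∀ f : (Fin n → Fin m) → ℝ,
      (∀ i ω ω', (∀ j, j ≠ i → ω j = ω' j) → f ω - f ω' ≤ 1) →
      ∑ ω, Real.exp (s * f ω) ≤
        (m : ℝ) ^ n * Real.exp (s * ((∑ ω, f ω) / (m : ℝ) ^ n) + n * s ^ 2) := by
  have hm' : (0 : ℝ) < m := by exact_mod_cast hm
  induction n with
  | zero => intro f _; simp
  | succ n ih =>
    intro f hf
    set g : Fin m → ℝ := fun x => (∑ ω : Fin n → Fin m, f (Fin.cons x ω)) / (m : ℝ) ^ n with hgdef
    have hg : ∀ x y, g x - g y ≤ 1 := by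
      intro x y
      simp only [hgdef]
      rw [← sub_div, ← Finset.sum_sub_distrib, div_le_one (by positivity)]
      calc ∑ ω : Fin n → Fin m, (f (Fin.cons x ω) - f (Fin.cons y ω))
          ≤ ∑ _ω : Fin n → Fin m, (1 : ℝ) := by
            refine Finset.sum_le_sum fun ω _ => hf 0 _ _ ?_
            intro j hj
            obtain ⟨k, rfl⟩ := Fin.exists_succ_eq.2 hj
            simp
        _ = (m : ℝ) ^ n := by simp
    have hfib : ∀ x, ∑ ω : Fin n → Fin m, Real.exp (s * f (Fin.cons x ω)) ≤
        (m : ℝ) ^ n * Real.exp (s * g x + n * s ^ 2) := by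
      intro x
      refine ih (fun ω => f (Fin.cons x ω)) ?_
      intro i ω ω' h
      refine hf i.succ _ _ ?_
      intro j hj
      refine Fin.cases ?_ (fun k hk => ?_) j hj
      · intro _; simp
      · simpa using h k (fun e => hk (by rw [e]))
    have hmean : (∑ x, g x) / m = (∑ ω, f ω) / (m : ℝ) ^ (n + 1) := by
      simp only [hgdef]
      rw [← Finset.sum_div, div_div, ← pow_succ, ← sum_cons]
    rw [sum_cons]
    calc ∑ x : Fin m, ∑ ω : Fin n → Fin m, Real.exp (s * f (Fin.cons x ω))
        ≤ ∑ x, (m : ℝ) ^ n * Real.exp (s * g x + n * s ^ 2) := Finset.sum_le_sum fun x _ => hfib x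
      _ = (m : ℝ) ^ n * Real.exp (n * s ^ 2) * ∑ x, Real.exp (s * g x) := by
          rw [Finset.mul_sum]
          refine Finset.sum_congr rfl fun x _ => ?_
          rw [Real.exp_add]; ring
      _ ≤ (m : ℝ) ^ n * Real.exp (n * s ^ 2) *
            (m * Real.exp (s * ((∑ x, g x) / m) + s ^ 2)) := by
          gcongr
          exact sum_exp_le_one_step hm g s hs hg
      _ = _ := by
          rw [hmean]
          push_cast
          rw [show ((n : ℝ) + 1) * s ^ 2 = n * s ^ 2 + s ^ 2 by ring]
          simp only [Real.exp_add]
          ring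

/-- Upper tail of the bounded-differences inequality, from the exponential moment at
`s = t / (2n)`; the lower tail is the same bound for `-f`. -/
lemma card_deviation_le {n m : ℕ} (hn : 0 < n) (hm : 0 < m) (f : (Fin n → Fin m) → ℝ)
    (hf : ∀ i ω ω', (∀ j, j ≠ i → ω j = ω' j) → f ω - f ω' ≤ 1)
    (t : ℝ) (ht : 0 ≤ t) (htn : t ≤ 2 * n) :
    ((Finset.univ.filter fun ω => (∑ ω, f ω) / (m : ℝ) ^ n + t ≤ f ω).card : ℝ) ≤
      (m : ℝ) ^ n * Real.exp (-(t ^ 2 / (4 * n))) := by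
  have hn' : (0 : ℝ) < n := by exact_mod_cast hn
  set a := (∑ ω, f ω) / (m : ℝ) ^ n with ha
  set s := t / (2 * n) with hs
  have hs0 : 0 ≤ s := by positivity
  have hs1 : |s| ≤ 1 := by
    rw [abs_of_nonneg hs0, hs, div_le_one (by positivity)]; exact htn
  have hexp := sum_exp_le hm s hs1 n f hf
  rw [← ha] at hexp
  set S := Finset.univ.filter fun ω => a + t ≤ f ω with hS
  have h1 : (S.card : ℝ) * Real.exp (s * (a + t)) ≤ ∑ ω, Real.exp (s * f ω) := by
    calc (S.card : ℝ) * Real.exp (s * (a + t)) = ∑ _ω ∈ S, Real.exp (s * (a + t)) := by simp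
      _ ≤ ∑ ω ∈ S, Real.exp (s * f ω) := by
          refine Finset.sum_le_sum fun ω hω => ?_
          have : a + t ≤ f ω := (Finset.mem_filter.1 hω).2
          gcongr
      _ ≤ ∑ ω, Real.exp (s * f ω) :=
          Finset.sum_le_sum_of_subset_of_nonneg (Finset.subset_univ _)
            fun _ _ _ => (Real.exp_pos _).le
  have h2 : s * a + n * s ^ 2 = -(t ^ 2 / (4 * n)) + s * (a + t) := by
    rw [hs]; field_simp; ring
  rw [h2, Real.exp_add, ← mul_assoc] at hexp
  exact le_of_mul_le_mul_right (h1.trans hexp) (Real.exp_pos _)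

/-- Two placements which differ only in ball `i` have the same empty bins, except possibly for the
bins `ω i` and `ω' i`. -/
lemma emptyBins_le_add_one {n m : ℕ} (i : Fin n) (ω ω' : Fin n → Fin m)
    (h : ∀ j, j ≠ i → ω j = ω' j) : emptyBins n m ω ≤ emptyBins n m ω' + 1 := by
  unfold emptyBins
  refine le_trans (Finset.card_le_card ?_) (Finset.card_insert_le (ω' i) _)
  intro b hb
  simp only [Finset.mem_filter, Finset.mem_univ, true_and, Finset.mem_insert] at hb ⊢
  by_cases hbi : b = ω' i
  · exact Or.inl hbi
  · right
    intro j
    by_cases hj : j = i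
    · subst hj; exact fun e => hbi e.symm
    · rw [← h j hj]; exact hb j

/-- A given bin is avoided by `(m - 1)^n` of the placements. -/
lemma sum_emptyBins (n m : ℕ) :
    ∑ ω : Fin n → Fin m, emptyBins n m ω = m * (m - 1) ^ n := by
  unfold emptyBins
  simp only [Finset.card_filter]
  rw [Finset.sum_comm]
  have : ∀ b : Fin m, (∑ ω : Fin n → Fin m, if ∀ i, ω i ≠ b then 1 else 0) = (m - 1) ^ n := by
    intro b
    rw [← Finset.card_filter]
    have : (Finset.univ.filter fun ω : Fin n → Fin m => ∀ i, ω i ≠ b) =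
        Fintype.piFinset fun _ => Finset.univ.erase b := by
      ext ω; simp [Fintype.mem_piFinset]
    rw [this]
    simp
  simp [this]

lemma mean_eq {n m : ℕ} (hm : 0 < m) :
    (∑ ω : Fin n → Fin m, (emptyBins n m ω : ℝ)) / (m : ℝ) ^ n = m * (1 - 1 / (m : ℝ)) ^ n := by
  have hm' : (0 : ℝ) < m := by exact_mod_cast hm
  rw [← Nat.cast_sum, sum_emptyBins]
  push_cast [Nat.cast_sub (show 1 ≤ m from hm)]
  rw [mul_div_assoc, ← div_pow, sub_div, div_self hm'.ne']

lemma one_sub_pow_le (n : ℕ) (x : ℝ) (h1 : x ≤ 1) : (1 - x) ^ n ≤ Real.exp (-(n * x)) := by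
  have : Real.exp (-(n * x)) = Real.exp (-x) ^ n := by rw [← Real.exp_nat_mul]; ring_nf
  rw [this]
  exact pow_le_pow_left₀ (by linarith) (Real.one_sub_le_exp_neg x) n

/-- From `e^{-x} (1 - x²) ≤ 1 - x` and Bernoulli's inequality. -/
lemma le_one_sub_pow (n : ℕ) (x : ℝ) (h0 : 0 ≤ x) (h1 : x ≤ 1) (hx : 2 * (n * x ^ 2) ≤ 1) :
    Real.exp (-(n * x)) / 2 ≤ (1 - x) ^ n := by
  have hE : Real.exp (-(n * x)) = Real.exp (-x) ^ n := by rw [← Real.exp_nat_mul]; ring_nf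
  have hstep : Real.exp (-x) * (1 - x ^ 2) ≤ 1 - x := by
    have h := Real.add_one_le_exp x
    have h2 : Real.exp (-x) * (x + 1) ≤ 1 := by
      calc Real.exp (-x) * (x + 1) ≤ Real.exp (-x) * Real.exp x := by gcongr
        _ = 1 := by rw [← Real.exp_add]; simp
    nlinarith
  have hsq : x ^ 2 ≤ 1 := pow_le_one₀ h0 h1
  have hB : 1 / 2 ≤ (1 - x ^ 2) ^ n := by
    have := one_add_mul_le_pow (a := -x ^ 2) (by linarith) n
    rw [← sub_eq_add_neg] at this
    linarith
  calc Real.exp (-(n * x)) / 2 = Real.exp (-x) ^ n * (1 / 2) := by rw [hE]; ring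
    _ ≤ Real.exp (-x) ^ n * (1 - x ^ 2) ^ n := by gcongr
    _ = (Real.exp (-x) * (1 - x ^ 2)) ^ n := by rw [mul_pow]
    _ ≤ (1 - x) ^ n :=
        pow_le_pow_left₀ (mul_nonneg (Real.exp_pos _).le (by linarith)) hstep n

/-- The growth conditions on `n` under which the bound holds. -/
lemma eventually_large (β c : ℝ) : ∃ n₀ : ℕ, ∀ n : ℕ, n₀ ≤ n →
    1 ≤ Real.log n ∧ β ≤ Real.log n ∧ Real.log n ^ 2 ≤ n ∧
      4 * (c + 1) * Real.log n ^ 3 ≤ (n : ℝ) ^ (1 / 2 : ℝ) := by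
  rw [← Filter.eventually_atTop (p := fun n : ℕ => 1 ≤ Real.log n ∧ β ≤ Real.log n ∧
    Real.log n ^ 2 ≤ n ∧ 4 * (c + 1) * Real.log n ^ 3 ≤ (n : ℝ) ^ (1 / 2 : ℝ))]
  have hlog : Filter.Tendsto (fun n : ℕ => Real.log n) Filter.atTop Filter.atTop :=
    Real.tendsto_log_atTop.comp tendsto_natCast_atTop_atTop
  have h2 := (isLittleO_log_rpow_rpow_atTop 2 (zero_lt_one (α := ℝ))).bound zero_lt_one
  have h3 := (isLittleO_log_rpow_rpow_atTop 3 (show (0 : ℝ) < 1 / 2 by norm_num)).bound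
    (show 0 < (4 * (|c| + 1))⁻¹ by positivity)
  filter_upwards [hlog.eventually_ge_atTop 1, hlog.eventually_ge_atTop β,
    tendsto_natCast_atTop_atTop.eventually h2, tendsto_natCast_atTop_atTop.eventually h3]
    with n a1 a2 a3 a4
  have hl : 0 ≤ Real.log n := by linarith
  refine ⟨a1, a2, ?_, ?_⟩
  · rw [Real.norm_of_nonneg (by positivity), Real.norm_of_nonneg (by positivity)] at a3
    simpa using a3
  · rw [Real.norm_of_nonneg (by positivity), Real.norm_of_nonneg (by positivity)] at a4
    rw [inv_mul_eq_div, le_div_iff₀ (by positivity)] at a4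
    have e : Real.log n ^ (3 : ℝ) = Real.log n ^ 3 := by exact_mod_cast Real.rpow_natCast _ 3
    rw [e] at a4
    have : 4 * (c + 1) * Real.log n ^ 3 ≤ 4 * (|c| + 1) * Real.log n ^ 3 := by
      gcongr; exact le_abs_self c
    linarith

/-- When the mean of `X₀` lies in `[μ/2, μ]`, the two tails at distance `μ/4` cover the failure of
`μ/4 ≤ X₀ ≤ 2μ`. -/
lemma card_good_ge {n m : ℕ} (hn : 0 < n) (hm : 0 < m) (μ : ℝ) (hμ : 0 < μ) (hμn : μ ≤ 8 * n)
    (hlo : μ / 2 ≤ m * (1 - 1 / (m : ℝ)) ^ n) (hhi : m * (1 - 1 / (m : ℝ)) ^ n ≤ μ) :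
    1 - 2 * Real.exp (-((μ / 4) ^ 2 / (4 * n))) ≤
      ((Finset.univ.filter fun ω : Fin n → Fin m =>
        μ / 4 ≤ (emptyBins n m ω : ℝ) ∧ (emptyBins n m ω : ℝ) ≤ 2 * μ).card : ℝ) / (m : ℝ) ^ n := by
  have hm' : (0 : ℝ) < m := by exact_mod_cast hm
  have hlip : ∀ i (ω ω' : Fin n → Fin m), (∀ j, j ≠ i → ω j = ω' j) →
      (emptyBins n m ω : ℝ) - emptyBins n m ω' ≤ 1 := by
    intro i ω ω' h
    have : (emptyBins n m ω : ℝ) ≤ emptyBins n m ω' + 1 := by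
      exact_mod_cast emptyBins_le_add_one i ω ω' h
    linarith
  have hup := card_deviation_le hn hm (fun ω => (emptyBins n m ω : ℝ)) hlip (μ / 4)
    (by positivity) (by linarith)
  have hdown := card_deviation_le hn hm (fun ω => -(emptyBins n m ω : ℝ))
    (fun i ω ω' h => by
      have := hlip i ω' ω (fun j hj => (h j hj).symm)
      linarith) (μ / 4) (by positivity) (by linarith)
  simp only [Finset.sum_neg_distrib, neg_div] at hdown
  rw [mean_eq hm] at hup hdown
  set a := (m : ℝ) * (1 - 1 / (m : ℝ)) ^ n
  set U := Finset.univ.filter fun ω : Fin n → Fin m => a + μ / 4 ≤ (emptyBins n m ω : ℝ)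
  set D := Finset.univ.filter fun ω : Fin n → Fin m => -a + μ / 4 ≤ -(emptyBins n m ω : ℝ)
  set G := Finset.univ.filter fun ω : Fin n → Fin m =>
        μ / 4 ≤ (emptyBins n m ω : ℝ) ∧ (emptyBins n m ω : ℝ) ≤ 2 * μ
  have hcover : (Finset.univ : Finset (Fin n → Fin m)) ⊆ G ∪ (U ∪ D) := by
    intro ω _
    simp only [G, U, D, Finset.mem_union, Finset.mem_filter, Finset.mem_univ, true_and]
    by_cases h1 : μ / 4 ≤ (emptyBins n m ω : ℝ)
    · by_cases h2 : (emptyBins n m ω : ℝ) ≤ 2 * μ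
      · exact Or.inl ⟨h1, h2⟩
      · exact Or.inr (Or.inl (by linarith [not_le.1 h2]))
    · exact Or.inr (Or.inr (by linarith [not_le.1 h1]))
  have hcard : m ^ n ≤ G.card + (U.card + D.card) := by
    have h1 := Finset.card_le_card hcover
    have h2 := Finset.card_union_le G (U ∪ D)
    have h3 := Finset.card_union_le U D
    simp only [Finset.card_univ, Fintype.card_fun, Fintype.card_fin] at h1
    omega
  have hcard' : (m : ℝ) ^ n ≤ G.card + (U.card + D.card) := by exact_mod_cast hcard
  rw [le_div_iff₀ (by positivity)]
  linarith

/-- For `β ≥ 4` and `c ≥ 8`, for all sufficiently large `n`, throwing `n` balls uniformly and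
independently into `m = β n / log n` bins, the number `X₀` of empty bins satisfies
`(β/4) n^{1-1/β}/log n ≤ X₀ ≤ 2β n^{1-1/β}/log n` with probability at least `1 - n^{-c}`;
probability is the fraction of the `m^n` equally likely outcomes for which the event holds. -/
theorem stmt_3 (β c : ℝ) (hβ : 4 ≤ β) (hc : 8 ≤ c) :
    ∃ n₀ : ℕ, ∀ n : ℕ, n₀ ≤ n → ∀ m : ℕ, 0 < m →
      (m : ℝ) = β * n / Real.log n →
      1 - (n : ℝ) ^ (-c) ≤
        ((Finset.univ.filter fun ω : Fin n → Fin m =>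
              (β / 4) * (n : ℝ) ^ ((1 : ℝ) - 1 / β) / Real.log n ≤ (emptyBins n m ω : ℝ) ∧
              (emptyBins n m ω : ℝ) ≤ 2 * β * (n : ℝ) ^ ((1 : ℝ) - 1 / β) / Real.log n).card : ℝ)
          / (m : ℝ) ^ n := by
  obtain ⟨n₀, hn₀⟩ := eventually_large β c
  refine ⟨n₀, fun n hn m hm hmeq => ?_⟩
  obtain ⟨hL1, hLβ, hLsq, hLcube⟩ := hn₀ n hn
  set L := Real.log n with hL
  have hLpos : 0 < L := by linarith
  have hβpos : 0 < β := by linarith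
  have hnpos : 0 < n := by
    rcases Nat.eq_zero_or_pos n with h | h
    · rw [hL, h] at hLpos; simp at hLpos
    · exact h
  have hn' : (0 : ℝ) < n := by exact_mod_cast hnpos
  have hn1 : (1 : ℝ) ≤ n := by exact_mod_cast hnpos
  have hm' : (0 : ℝ) < m := by exact_mod_cast hm
  have hm1 : (1 : ℝ) ≤ m := by exact_mod_cast hm
  set μ := β * (n : ℝ) ^ ((1 : ℝ) - 1 / β) / L with hμ
  have hμpos : 0 < μ := by positivity
  have hnm : (n : ℝ) * (1 / m) = L * (1 / β) := by rw [hmeq]; field_simp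
  -- `n / m = log n / β`, so `m e^{-n/m} = m n^{-1/β} = μ`.
  have hμexp : μ = m * Real.exp (-(n * (1 / (m : ℝ)))) := by
    rw [hnm, hμ, hmeq, sub_eq_add_neg, Real.rpow_add hn', Real.rpow_one,
      Real.rpow_def_of_pos hn' (-(1 / β)), ← hL, mul_neg]
    ring
  have hx1 : 1 / (m : ℝ) ≤ 1 := by rw [div_le_one hm']; exact hm1
  have hhi : m * (1 - 1 / (m : ℝ)) ^ n ≤ μ := by
    rw [hμexp]
    exact mul_le_mul_of_nonneg_left (one_sub_pow_le n _ hx1) hm'.le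
  have hsmall : 2 * ((n : ℝ) * (1 / (m : ℝ)) ^ 2) ≤ 1 := by
    have : (n : ℝ) * (1 / (m : ℝ)) ^ 2 = L ^ 2 / (β ^ 2 * n) := by rw [hmeq]; field_simp
    rw [this, ← mul_div_assoc, div_le_one (by positivity)]
    have hβ2 : 2 ≤ β ^ 2 := by nlinarith
    nlinarith [mul_le_mul_of_nonneg_right hβ2 hn'.le]
  have hlo : μ / 2 ≤ m * (1 - 1 / (m : ℝ)) ^ n := by
    rw [hμexp, mul_div_assoc]
    exact mul_le_mul_of_nonneg_left (le_one_sub_pow n _ (by positivity) hx1 hsmall) hm'.le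
  have hμn : μ ≤ 8 * n := by
    have h1 : μ ≤ m := by
      rw [hμexp]
      refine mul_le_of_le_one_right hm'.le (Real.exp_le_one_iff.2 ?_)
      have : 0 ≤ (n : ℝ) * (1 / m) := by positivity
      linarith
    have h2 : (m : ℝ) ≤ n := by
      rw [hmeq, div_le_iff₀ hLpos, mul_comm]
      gcongr
    linarith
  have hmain := card_good_ge hnpos hm μ hμpos hμn hlo hhi
  have e1 : β / 4 * (n : ℝ) ^ ((1 : ℝ) - 1 / β) / L = μ / 4 := by rw [hμ]; ring
  have e2 : 2 * β * (n : ℝ) ^ ((1 : ℝ) - 1 / β) / L = 2 * μ := by rw [hμ]; ring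
  rw [e1, e2]
  refine le_trans (sub_le_sub_left ?_ 1) hmain
  have hμlow : 4 * (n : ℝ) ^ (3 / 4 : ℝ) / L ≤ μ := by
    have : (3 / 4 : ℝ) ≤ 1 - 1 / β := by
      have : 1 / β ≤ 1 / 4 := one_div_le_one_div_of_le (by norm_num) hβ
      linarith
    rw [hμ]
    gcongr
  have hexpo : (c + 1) * L ≤ (μ / 4) ^ 2 / (4 * n) := by
    have hsq : ((n : ℝ) ^ (3 / 4 : ℝ)) ^ 2 = n * (n : ℝ) ^ (1 / 2 : ℝ) := by
      rw [← Real.rpow_natCast, ← Real.rpow_mul hn'.le]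
      nth_rewrite 2 [← Real.rpow_one (n : ℝ)]
      rw [← Real.rpow_add hn']
      norm_num
    calc (c + 1) * L ≤ (n : ℝ) ^ (1 / 2 : ℝ) / (4 * L ^ 2) := by
          rw [le_div_iff₀ (by positivity)]; linarith
      _ = (4 * (n : ℝ) ^ (3 / 4 : ℝ) / L / 4) ^ 2 / (4 * n) := by
          have : (4 * (n : ℝ) ^ (3 / 4 : ℝ) / L / 4) ^ 2 = ((n : ℝ) ^ (3 / 4 : ℝ)) ^ 2 / L ^ 2 := by
            field_simp
          rw [this, hsq]; field_simp
      _ ≤ (μ / 4) ^ 2 / (4 * n) := by gcongr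
  -- The factor `2` from the two tails is absorbed by the extra `log n ≥ 1` in the exponent.
  have h2 : 2 * Real.exp (-L) ≤ 1 := by
    have h3 : 2 ≤ Real.exp L := by linarith [Real.add_one_le_exp L]
    calc 2 * Real.exp (-L) ≤ Real.exp L * Real.exp (-L) := by gcongr
      _ = 1 := by rw [← Real.exp_add]; simp
  calc 2 * Real.exp (-((μ / 4) ^ 2 / (4 * n))) ≤ 2 * Real.exp (-((c + 1) * L)) := by gcongr
    _ = 2 * Real.exp (-L) * Real.exp (-(c * L)) := by
        rw [mul_assoc, ← Real.exp_add]; ring_nf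
    _ ≤ 1 * Real.exp (-(c * L)) := by gcongr
    _ = (n : ℝ) ^ (-c) := by
        rw [Real.rpow_def_of_pos hn', ← hL, one_mul]; ring_nf
end

section
/- Let C ⊆ ℝ² be an axis-aligned square of side length ℓ > 0, and let C′ be the axis-aligned square with the same center as C and side length δ = ℓ/(1 + 2√2). Then for every p ∈ C′ and every x ∈ C′, dist(x,p) ≤ dist(x, ∂C); that is, C′ ⊆ D_p = {x ∈ C : dist(x,p) ≤ dist(x, ∂C)} for every p ∈ C′. -/
/-!
The choice of `δ` makes `(ℓ - δ) / 2 = √2 δ`. Two points of `C'` differ by at most `δ` in each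
coordinate, so their distance is at most `√2 δ` (`distE_le_of_mem_square`). A point of `∂C` has a
coordinate equal to an endpoint of the corresponding side of `C` (`frontier_square`), and in that
coordinate it differs from any point of `C'` by at least `(ℓ - δ) / 2`.
-/

/-- Euclidean distance on `ℝ × ℝ`. -/
noncomputable def distE (x y : ℝ × ℝ) : ℝ :=
  Real.sqrt ((x.1 - y.1) ^ 2 + (x.2 - y.2) ^ 2)

/-- The axis-aligned square with bottom-left corner `a` and side length `ℓ`. -/
def square (a : ℝ × ℝ) (ℓ : ℝ) : Set (ℝ × ℝ) :=
  Set.Icc a.1 (a.1 + ℓ) ×ˢ Set.Icc a.2 (a.2 + ℓ)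

/-- The Euclidean distance from a point to a set (used for the boundary `∂C`). -/
noncomputable def distBd (x : ℝ × ℝ) (S : Set (ℝ × ℝ)) : ℝ :=
  sInf (distE x '' S)

/-- `D_p`: the set of points of the square that are at least as close to `p` as to the
boundary of the square. -/
noncomputable def Dcell (a : ℝ × ℝ) (ℓ : ℝ) (p : ℝ × ℝ) : Set (ℝ × ℝ) :=
  {x ∈ square a ℓ | distE x p ≤ distBd x (frontier (square a ℓ))}

theorem frontier_square (a : ℝ × ℝ) {ℓ : ℝ} (hℓ : 0 < ℓ) :
    frontier (square a ℓ) =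
      Set.Icc a.1 (a.1 + ℓ) ×ˢ {a.2, a.2 + ℓ} ∪ {a.1, a.1 + ℓ} ×ˢ Set.Icc a.2 (a.2 + ℓ) := by
  rw [square, frontier_prod_eq, frontier_Icc (by linarith), frontier_Icc (by linarith),
    closure_Icc, closure_Icc]

theorem distE_le_of_mem_square {b x p : ℝ × ℝ} {δ : ℝ} (hδ : 0 ≤ δ)
    (hx : x ∈ square b δ) (hp : p ∈ square b δ) : distE x p ≤ √2 * δ := by
  obtain ⟨⟨hx1, hx2⟩, hx3, hx4⟩ := hx
  obtain ⟨⟨hp1, hp2⟩, hp3, hp4⟩ := hp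
  have h1 : (x.1 - p.1) ^ 2 ≤ δ ^ 2 := sq_le_sq' (by linarith) (by linarith)
  have h2 : (x.2 - p.2) ^ 2 ≤ δ ^ 2 := sq_le_sq' (by linarith) (by linarith)
  refine Real.sqrt_le_iff.2 ⟨by positivity, ?_⟩
  rw [mul_pow, Real.sq_sqrt zero_le_two]
  linarith

theorem abs_fst_sub_le_distE (x y : ℝ × ℝ) : |x.1 - y.1| ≤ distE x y :=
  Real.abs_le_sqrt (le_add_of_nonneg_right (sq_nonneg _))

theorem abs_snd_sub_le_distE (x y : ℝ × ℝ) : |x.2 - y.2| ≤ distE x y :=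
  Real.abs_le_sqrt (le_add_of_nonneg_left (sq_nonneg _))

/-- A point of the concentric square obtained by moving each side of `C` inwards by `r` has
distance at least `r` from `∂C`. -/
theorem le_distBd_frontier {a x : ℝ × ℝ} {ℓ r : ℝ} (hℓ : 0 < ℓ)
    (hx : x ∈ square (a.1 + r, a.2 + r) (ℓ - 2 * r)) :
    r ≤ distBd x (frontier (square a ℓ)) := by
  obtain ⟨⟨hx1, hx2⟩, hx3, hx4⟩ := hx
  dsimp only at hx1 hx2 hx3 hx4
  rw [frontier_square a hℓ]
  -- The boundary is nonempty, so the infimum is not the junk value `sInf ∅ = 0`.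
  refine le_csInf (Set.Nonempty.image _ ⟨a, Or.inl ⟨⟨le_rfl, by linarith⟩, Or.inl rfl⟩⟩) ?_
  rintro _ ⟨y, ⟨-, hy | hy⟩ | ⟨hy | hy, -⟩, rfl⟩
  · have hy : y.2 = a.2 := hy
    linarith [abs_snd_sub_le_distE x y, le_abs_self (x.2 - y.2)]
  · have hy : y.2 = a.2 + ℓ := hy
    linarith [abs_snd_sub_le_distE x y, neg_le_abs (x.2 - y.2)]
  · have hy : y.1 = a.1 := hy
    linarith [abs_fst_sub_le_distE x y, le_abs_self (x.1 - y.1)]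
  · have hy : y.1 = a.1 + ℓ := hy
    linarith [abs_fst_sub_le_distE x y, neg_le_abs (x.1 - y.1)]

/-- Let `C` be an axis-aligned square of side `ℓ > 0` and let `C'` be the concentric
axis-aligned square of side `δ = ℓ/(1 + 2√2)`. Then every point `x ∈ C'` is at least as
close to any `p ∈ C'` as to the boundary `∂C`; that is, `C' ⊆ D_p` for every `p ∈ C'`. -/
theorem stmt_11 (a : ℝ × ℝ) (ℓ : ℝ) (hℓ : 0 < ℓ) (δ : ℝ)
    (hδ : δ = ℓ / (1 + 2 * Real.sqrt 2)) :
    ∀ p ∈ square (a.1 + (ℓ - δ) / 2, a.2 + (ℓ - δ) / 2) δ,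
      (∀ x ∈ square (a.1 + (ℓ - δ) / 2, a.2 + (ℓ - δ) / 2) δ,
          distE x p ≤ distBd x (frontier (square a ℓ))) ∧
        square (a.1 + (ℓ - δ) / 2, a.2 + (ℓ - δ) / 2) δ ⊆ Dcell a ℓ p := by
  have hδ0 : 0 < δ := by rw [hδ]; positivity
  have hgap : (ℓ - δ) / 2 = √2 * δ := by
    have : δ * (1 + 2 * √2) = ℓ := by rw [hδ]; exact div_mul_cancel₀ _ (by positivity)
    linarith
  have hr : 0 ≤ (ℓ - δ) / 2 := by rw [hgap]; positivity
  intro p hp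
  have key : ∀ x ∈ square (a.1 + (ℓ - δ) / 2, a.2 + (ℓ - δ) / 2) δ,
      distE x p ≤ distBd x (frontier (square a ℓ)) := by
    intro x hx
    refine (distE_le_of_mem_square hδ0.le hx hp).trans (hgap ▸ le_distBd_frontier hℓ ?_)
    rwa [show ℓ - 2 * ((ℓ - δ) / 2) = δ by ring]
  refine ⟨key, fun x hx => ⟨?_, key x hx⟩⟩
  obtain ⟨⟨hx1, hx2⟩, hx3, hx4⟩ := hx
  dsimp only at hx1 hx2 hx3 hx4
  exact ⟨⟨by linarith, by linarith⟩, by linarith, by linarith⟩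
end

section
/- There exist constants c > 0, c₁ > 0, a > 0, b > 0, K > 0, and n₀ such that for every integer n ≥ n₀ the following holds. Let p₁,…,pₙ be n points chosen independently and uniformly at random from the flat unit torus T², let P = {p₁,…,pₙ}, let f = ⌈c·√n·log n⌉ and R = c₁·√((log n)/n), and define the (random) selected index i* as the smallest index i with n − f < i ≤ n such that the closed ball of radius R centered at pᵢ contains none of the points p₁,…,p_{i−1}; if no such index exists, set i* = n. Then with probability at least 1 − K·(log² n)/√n, both of the following hold: μ(Vor(p_{i*}, P)) ≥ a·(log n)/n, and max over p ∈ P of μ(Vor(p,P)) ≤ b·(log n)/n. In particular, the online strategy selecting p_{i*} is O(1)-competitive against the prophet who picks the largest Voronoi cell of P, with probability at least 1 − K·(log² n)/√n. -/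
/-!
The argument works with the sup-distance `dist` on `T2`, which is comparable to `dT`
(`dist_le_dT`, `dT_le_two_mul_dist`) and whose balls are squares, of area `(2 * R) ^ 2`. The
constants are `c = 1`, `c₁ = 1 / 8`, `a = 1 / 1024`, `b = 64`, `K = 8`. Write `L = log n`.

*All cells are small.* Let `r = √(L / n)`. A grid of `O(n / L)` points is `r`-dense, and a given
grid point has no site within `r` with probability `(1 - 4 L / n) ^ n ≤ n ^ (-4)`. If no grid point is
missed, every cell lies in a sup-ball of radius `4 * r` around its site (`volume_vor_le`).

*The player finds an acceptable point.* Let `U` be the set of points at sup-distance more than `R`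
from the first `n - f` points. Its area has mean at least `n ^ (-1 / 8)` and variance at most
`(4 * R) ^ 2`, because the events that two probe points lie in `U` are nonpositively correlated
unless the probes are within `2 * R` of each other; so by Chebyshev the area is at least half of
its mean (`law_freeSet_small_le`). Only the next `g ≈ n ^ (1 / 8) * L` points are
needed: one of them falls in `U` (`law_miss_freeSet_le`), and no two of them are within `R` of each
other (`law_exists_close_le`), so the one in `U` is acceptable. Taking `g` small compared with `f`
is what makes the union bound over pairs affordable.

*The selected point keeps a large cell.* The event that `i` is the first acceptable index depends
only on the points up to `i`, so each of the at most `f` later points falls within `R` of the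
selected point with conditional probability at most `(2 * R) ^ 2` (`law_first_spoiled_le`). This
gives the dominant error `f * R ^ 2 ≈ L ^ 2 / √n`. If it does not happen, all other sites are at
`dT`-distance more than `R`, and the cell contains a sup-ball of radius `R / 8` (`le_volume_vor`).
-/

open MeasureTheory
open scoped Classical

instance : Fact ((0 : ℝ) < 1) := ⟨one_pos⟩

/-- The flat unit torus `T² = (ℝ/ℤ)²`. -/
abbrev T2 : Type := AddCircle (1 : ℝ) × AddCircle (1 : ℝ)

/-- The torus distance on `T²`: the Euclidean combination of the quotient distances on the
two coordinates. -/
noncomputable def dT (p q : T2) : ℝ :=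
  Real.sqrt (dist p.1 q.1 ^ 2 + dist p.2 q.2 ^ 2)

/-- The Voronoi cell of `p` with respect to the site set `P`, in the torus metric. -/
def vor (p : T2) (P : Set T2) : Set T2 :=
  {x | ∀ q ∈ P, dT x p ≤ dT x q}

/-- The point picked by the player's online strategy: the first point, among the last `f`
points of the stream `ω` (i.e. with 0-based index `i` satisfying `n - f ≤ i < n`), whose
closed ball of radius `R` contains none of the previously seen points; if no such point
exists, the last point of the stream is picked (a junk value is returned when `n = 0`). -/
noncomputable def selPoint (n f : ℕ) (R : ℝ) (ω : Fin n → T2) : T2 :=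
  if h : (Finset.univ.filter fun i : Fin n =>
      n - f ≤ (i : ℕ) ∧ ∀ j : Fin n, j < i → R < dT (ω j) (ω i)).Nonempty then
    ω ((Finset.univ.filter fun i : Fin n =>
      n - f ≤ (i : ℕ) ∧ ∀ j : Fin n, j < i → R < dT (ω j) (ω i)).min' h)
  else if hn : 0 < n then ω ⟨n - 1, Nat.sub_lt hn one_pos⟩
  else (0, 0)

open Metric

/-! ### The torus: balls and the two distances -/

instance isProbabilityMeasure_circle :
    IsProbabilityMeasure (volume : Measure (AddCircle (1 : ℝ))) :=
  ⟨by rw [AddCircle.measure_univ]; simp⟩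

instance isProbabilityMeasure_T2 : IsProbabilityMeasure (volume : Measure T2) :=
  inferInstanceAs (IsProbabilityMeasure
    ((volume : Measure (AddCircle (1 : ℝ))).prod (volume : Measure (AddCircle (1 : ℝ)))))

lemma volume_closedBall_T2 (x : T2) {r : ℝ} (hr0 : 0 ≤ r) (hr : r ≤ 1 / 2) :
    volume (closedBall x r) = ENNReal.ofReal ((2 * r) ^ 2) := by
  rw [← Prod.mk.eta (p := x), ← closedBall_prod_same]
  change ((volume : Measure (AddCircle (1 : ℝ))).prod volume) _ = _
  rw [Measure.prod_prod, AddCircle.volume_closedBall, AddCircle.volume_closedBall,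
    min_eq_right (by linarith), ← ENNReal.ofReal_mul (by linarith), sq]

lemma volume_closedBall_T2_le (x : T2) {r : ℝ} (hr0 : 0 ≤ r) :
    volume (closedBall x r) ≤ ENNReal.ofReal ((2 * r) ^ 2) := by
  by_cases hr : r ≤ 1 / 2
  · exact (volume_closedBall_T2 x hr0 hr).le
  · refine prob_le_one.trans ?_
    rw [ENNReal.one_le_ofReal]
    push Not at hr
    nlinarith

lemma dist_le_dT (p q : T2) : dist p q ≤ dT p q := by
  rw [Prod.dist_eq, dT]
  refine max_le ?_ ?_ <;> apply Real.le_sqrt_of_sq_le <;>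
    nlinarith [sq_nonneg (dist p.1 q.1), sq_nonneg (dist p.2 q.2)]

lemma dT_le_two_mul_dist (p q : T2) : dT p q ≤ 2 * dist p q := by
  have h1 : dist p.1 q.1 ≤ dist p q := by rw [Prod.dist_eq]; exact le_max_left _ _
  have h2 : dist p.2 q.2 ≤ dist p q := by rw [Prod.dist_eq]; exact le_max_right _ _
  rw [dT]
  apply Real.sqrt_le_iff.2 ⟨by positivity, ?_⟩
  have h3 : dist p.1 q.1 ^ 2 ≤ dist p q ^ 2 := by gcongr
  have h4 : dist p.2 q.2 ^ 2 ≤ dist p q ^ 2 := by gcongr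
  nlinarith [sq_nonneg (dist p q)]

lemma measurable_dT_coord {n : ℕ} (i j : Fin n) :
    Measurable fun ω : Fin n → T2 => dT (ω i) (ω j) := by
  unfold dT
  fun_prop

/-- A point of the circle is within `1 / m` of one of the `m` points `a / m`. -/
lemma exists_grid_circle (x : AddCircle (1 : ℝ)) {m : ℕ} (hm : 0 < m) :
    ∃ a : Fin m, dist x (((a : ℕ) / (m : ℝ) : ℝ) : AddCircle (1 : ℝ)) ≤ 1 / m := by
  have hm' : (0 : ℝ) < m := by exact_mod_cast hm
  obtain ⟨t, ⟨ht0, ht1⟩, rfl⟩ : ∃ t : ℝ, t ∈ Set.Ico (0 : ℝ) (0 + 1) ∧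
      ((t : ℝ) : AddCircle (1 : ℝ)) = x :=
    ⟨AddCircle.equivIco 1 0 x, (AddCircle.equivIco 1 0 x).2, AddCircle.coe_equivIco⟩
  have h0 : 0 ≤ t * m := by positivity
  have hlt : ⌊t * m⌋₊ < m := by
    rw [Nat.floor_lt h0]; nlinarith
  refine ⟨⟨⌊t * m⌋₊, hlt⟩, ?_⟩
  rw [dist_eq_norm, ← AddCircle.coe_sub]
  have hf1 := Nat.floor_le h0
  have hf2 := Nat.lt_floor_add_one (t * m)
  refine (QuotientAddGroup.norm_mk_le_norm).trans ?_
  rw [Real.norm_eq_abs, abs_le]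
  have e : t - (⌊t * m⌋₊ : ℝ) / m = (t * m - ⌊t * m⌋₊) / m := by field_simp
  simp only [e]
  constructor
  · have : 0 ≤ (t * m - ⌊t * m⌋₊) / m := div_nonneg (by linarith) hm'.le
    have : (0 : ℝ) ≤ 1 / m := by positivity
    linarith
  · gcongr; linarith

lemma measurableSet_forall {α ι : Type*} [MeasurableSpace α] [Countable ι] {p : ι → α → Prop}
    (h : ∀ i, MeasurableSet {x | p i x}) : MeasurableSet {x | ∀ i, p i x} := by
  have : {x | ∀ i, p i x} = ⋂ i, {x | p i x} := by ext; simp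
  rw [this]
  exact MeasurableSet.iInter h

lemma measurableSet_imp {α : Type*} [MeasurableSpace α] {q : Prop} {p : α → Prop}
    (h : q → MeasurableSet {x | p x}) : MeasurableSet {x | q → p x} := by
  by_cases hq : q
  · simpa [hq] using h hq
  · simp [hq]

/-! ### Probabilities of elementary events -/

/-- The law of `n` independent uniform points of the torus. -/
noncomputable abbrev law (n : ℕ) : Measure (Fin n → T2) :=
  Measure.pi fun _ : Fin n => (volume : Measure T2)

lemma law_forall_mem {n : ℕ} (S : Finset (Fin n)) (B : Set T2) :
    law n {ω | ∀ j ∈ S, ω j ∈ B} = volume B ^ S.card := by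
  have : {ω : Fin n → T2 | ∀ j ∈ S, ω j ∈ B} =
      Set.univ.pi fun j => if j ∈ S then B else Set.univ := by
    ext ω
    simp only [Set.mem_ofPred_eq, Set.mem_pi, Set.mem_univ, true_imp_iff]
    refine forall_congr' fun j => ?_
    by_cases h : j ∈ S <;> simp [h]
  rw [this, Measure.pi_pi]
  have : ∀ j : Fin n, volume (if j ∈ S then B else Set.univ) =
      if j ∈ S then volume B else 1 := by
    intro j; split_ifs <;> simp
  simp only [this]
  rw [Finset.prod_ite_mem]
  simp

/-- If `A` does not depend on the `j`-th point, then the event that `ω j` falls within `R` of `ω i`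
costs a factor of at most the area of a ball. -/
lemma law_inter_close_le {n : ℕ} {i j : Fin n} (hij : i ≠ j) {A : Set (Fin n → T2)}
    (hA : MeasurableSet A) (hAj : ∀ ω y, Function.update ω j y ∈ A ↔ ω ∈ A) {R : ℝ} (hR : 0 ≤ R) :
    law n (A ∩ {ω | dist (ω j) (ω i) ≤ R}) ≤ ENNReal.ofReal ((2 * R) ^ 2) * law n A := by
  have hD : MeasurableSet {ω : Fin n → T2 | dist (ω j) (ω i) ≤ R} :=
    measurableSet_le (by fun_prop) measurable_const
  rw [← lintegral_indicator_one (hA.inter hD), ← lintegral_indicator_one hA,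
    ← lintegral_const_mul _ (measurable_one.indicator hA)]
  refine lintegral_le_of_lmarginal_le {j} (measurable_one.indicator (hA.inter hD))
    ((measurable_one.indicator hA).const_mul _) ?_
  rw [lmarginal_singleton, lmarginal_singleton]
  intro ω
  by_cases h : ω ∈ A
  · have h1 : ∀ y, (A ∩ {ω : Fin n → T2 | dist (ω j) (ω i) ≤ R}).indicator
        (1 : (Fin n → T2) → ENNReal) (Function.update ω j y) =
        (closedBall (ω i) R).indicator 1 y := by
      intro y
      simp [Set.indicator_apply, hAj, h, Function.update_of_ne hij]
    have h2 : ∀ y, A.indicator (1 : (Fin n → T2) → ENNReal) (Function.update ω j y) = 1 := by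
      intro y; simp [hAj, h]
    simp only [h1, h2]
    rw [lintegral_indicator_one measurableSet_closedBall]
    simpa using volume_closedBall_T2_le (ω i) hR
  · simp [hAj, h]

/-- The part of the torus at sup-distance more than `R` from all points `ω j`, `j ∈ S`. -/
def freeSet {n : ℕ} (S : Finset (Fin n)) (R : ℝ) (ω : Fin n → T2) : Set T2 :=
  {x | ∀ j ∈ S, R < dist (ω j) x}

lemma measurableSet_freeSet_graph {n : ℕ} (S : Finset (Fin n)) (R : ℝ) :
    MeasurableSet {z : (Fin n → T2) × T2 | z.2 ∈ freeSet S R z.1} := by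
  simp only [freeSet, Set.mem_ofPred_eq]
  refine measurableSet_forall fun j => measurableSet_imp fun _ => ?_
  exact measurableSet_lt measurable_const (by fun_prop)

lemma measurable_volume_freeSet {n : ℕ} (S : Finset (Fin n)) (R : ℝ) :
    Measurable fun ω : Fin n → T2 => volume (freeSet S R ω) :=
  measurable_measure_prodMk_left (measurableSet_freeSet_graph S R)

lemma measurableSet_freeSet {n : ℕ} (S : Finset (Fin n)) (R : ℝ) (ω : Fin n → T2) :
    MeasurableSet (freeSet S R ω) :=
  measurable_prodMk_left (measurableSet_freeSet_graph S R)

lemma volume_far {R : ℝ} (hR : 0 ≤ R) (hR2 : R ≤ 1 / 2) (x : T2) :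
    volume {y | R < dist y x} = ENNReal.ofReal (1 - (2 * R) ^ 2) := by
  have : {y | R < dist y x} = (closedBall x R)ᶜ := by ext y; simp
  rw [this, prob_compl_eq_one_sub measurableSet_closedBall, volume_closedBall_T2 x hR hR2,
    ENNReal.ofReal_sub _ (by positivity), ENNReal.ofReal_one]

lemma lintegral_volume_freeSet {n : ℕ} (S : Finset (Fin n)) {R : ℝ} (hR : 0 ≤ R)
    (hR2 : R ≤ 1 / 2) :
    ∫⁻ ω, volume (freeSet S R ω) ∂law n = ENNReal.ofReal ((1 - (2 * R) ^ 2) ^ S.card) := by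
  have hm := measurableSet_freeSet_graph S R
  have h1 := Measure.prod_apply (μ := law n) (ν := (volume : Measure T2)) hm
  rw [Measure.prod_apply_symm hm] at h1
  refine Eq.trans h1.symm ?_
  have h2 : ∀ x : T2, law n ((fun ω => (ω, x)) ⁻¹' {z : (Fin n → T2) × T2 | z.2 ∈ freeSet S R z.1})
      = ENNReal.ofReal ((1 - (2 * R) ^ 2) ^ S.card) := by
    intro x
    refine (law_forall_mem S {y | R < dist y x}).trans ?_
    rw [volume_far hR hR2, ENNReal.ofReal_pow]
    nlinarith
  simp only [h2]
  simp

/-- Second moment of the free area: the two probe points `x`, `y` are either at distance more than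
`2 * R`, so that their balls are disjoint, or belong to a set of pairs of measure
at most `(4 * R) ^ 2`. -/
lemma lintegral_sq_volume_freeSet_le {n : ℕ} (S : Finset (Fin n)) {R : ℝ} (hR : 0 ≤ R)
    (hR2 : R ≤ 1 / 2) :
    ∫⁻ ω, volume (freeSet S R ω) ^ 2 ∂law n ≤
      ENNReal.ofReal (((1 - (2 * R) ^ 2) ^ S.card) ^ 2 + (4 * R) ^ 2) := by
  have hq : 0 ≤ 1 - (2 * R) ^ 2 := by nlinarith
  have hm : MeasurableSet {z : (Fin n → T2) × (T2 × T2) |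
      z.2.1 ∈ freeSet S R z.1 ∧ z.2.2 ∈ freeSet S R z.1} := by
    refine MeasurableSet.inter ?_ ?_
    · exact (measurableSet_freeSet_graph S R).preimage
        (f := fun z : (Fin n → T2) × (T2 × T2) => (z.1, z.2.1)) (by fun_prop)
    · exact (measurableSet_freeSet_graph S R).preimage
        (f := fun z : (Fin n → T2) × (T2 × T2) => (z.1, z.2.2)) (by fun_prop)
  have h1 := Measure.prod_apply (μ := law n) (ν := (volume : Measure T2).prod volume) hm
  rw [Measure.prod_apply_symm hm] at h1
  have h0 : ∀ ω : Fin n → T2, volume (freeSet S R ω) ^ 2 =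
      ((volume : Measure T2).prod volume) (Prod.mk ω ⁻¹' {z : (Fin n → T2) × (T2 × T2) |
      z.2.1 ∈ freeSet S R z.1 ∧ z.2.2 ∈ freeSet S R z.1}) := by
    intro ω
    rw [sq, ← Measure.prod_prod]
    rfl
  simp only [h0]
  rw [← h1]
  set q := (1 - (2 * R) ^ 2) ^ S.card with hqdef
  have hD : MeasurableSet {p : T2 × T2 | dist p.2 p.1 ≤ 2 * R} :=
    measurableSet_le (by fun_prop) measurable_const
  have h2 : ∀ p : T2 × T2, law n ((fun ω => (ω, p)) ⁻¹' {z : (Fin n → T2) × (T2 × T2) |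
      z.2.1 ∈ freeSet S R z.1 ∧ z.2.2 ∈ freeSet S R z.1}) ≤
      ENNReal.ofReal (q ^ 2) + {p : T2 × T2 | dist p.2 p.1 ≤ 2 * R}.indicator 1 p := by
    rintro ⟨x, y⟩
    by_cases hxy : dist y x ≤ 2 * R
    · refine prob_le_one.trans ?_
      simp [hxy]
    · refine le_add_right ?_
      have e : ((fun ω => (ω, (x, y))) ⁻¹' {z : (Fin n → T2) × (T2 × T2) |
          z.2.1 ∈ freeSet S R z.1 ∧ z.2.2 ∈ freeSet S R z.1}) =
          {ω : Fin n → T2 | ∀ j ∈ S, ω j ∈ (closedBall x R ∪ closedBall y R)ᶜ} := by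
        ext ω
        simp only [freeSet, Set.mem_preimage, Set.mem_ofPred_eq, Set.mem_compl_iff, Set.mem_union,
          mem_closedBall, not_or, not_le]
        exact ⟨fun h j hj => ⟨h.1 j hj, h.2 j hj⟩, fun h => ⟨fun j hj => (h j hj).1,
          fun j hj => (h j hj).2⟩⟩
      have hdisj : Disjoint (closedBall x R) (closedBall y R) := by
        apply closedBall_disjoint_closedBall
        rw [dist_comm]; linarith
      rw [e, law_forall_mem, prob_compl_eq_one_sub
        (measurableSet_closedBall.union measurableSet_closedBall),
        measure_union hdisj measurableSet_closedBall, volume_closedBall_T2 x hR hR2,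
        volume_closedBall_T2 y hR hR2, ← ENNReal.ofReal_add (by positivity) (by positivity),
        ← ENNReal.ofReal_one, ← ENNReal.ofReal_sub _ (by positivity), hqdef, ← pow_mul, mul_comm S.card 2,
        pow_mul, ENNReal.ofReal_pow (by positivity)]
      gcongr
      nlinarith [sq_nonneg ((2 * R) ^ 2)]
  refine (lintegral_mono h2).trans ?_
  rw [lintegral_add_left measurable_const, lintegral_indicator_one hD, Measure.prod_apply hD,
    ENNReal.ofReal_add (by positivity) (by positivity)]
  gcongr
  · simp
  · calc ∫⁻ x : T2, volume (Prod.mk x ⁻¹' {p : T2 × T2 | dist p.2 p.1 ≤ 2 * R})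
        ≤ ∫⁻ _ : T2, ENNReal.ofReal ((4 * R) ^ 2) := by
          refine lintegral_mono fun x => ?_
          have := volume_closedBall_T2_le x (r := 2 * R) (by linarith)
          rw [← mul_assoc] at this
          norm_num at this ⊢
          exact this
      _ = _ := by simp

/-- Chebyshev's inequality for the free area. -/
lemma law_freeSet_small_le {n : ℕ} (S : Finset (Fin n)) {R : ℝ} (hR : 0 ≤ R)
    (hR2 : R < 1 / 2) :
    law n {ω | volume (freeSet S R ω) < ENNReal.ofReal ((1 - (2 * R) ^ 2) ^ S.card / 2)} ≤
      ENNReal.ofReal ((4 * R) ^ 2 / ((1 - (2 * R) ^ 2) ^ S.card / 2) ^ 2) := by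
  have hq : 0 < 1 - (2 * R) ^ 2 := by nlinarith
  set q := (1 - (2 * R) ^ 2) ^ S.card with hqdef
  have hq0 : 0 < q := by positivity
  set X : (Fin n → T2) → ℝ := fun ω => (volume (freeSet S R ω)).toReal with hX
  have hmeas := measurable_volume_freeSet S R
  have hXm : Measurable X := hmeas.ennreal_toReal
  have hmem : MemLp X 2 (law n) := by
    refine MemLp.of_bound hXm.aestronglyMeasurable 1 (Filter.Eventually.of_forall fun ω => ?_)
    rw [Real.norm_eq_abs, abs_of_nonneg ENNReal.toReal_nonneg]
    exact ENNReal.toReal_le_of_le_ofReal zero_le_one (by simpa using prob_le_one)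
  have hE : ∫ ω, X ω ∂law n = q := by
    rw [integral_toReal hmeas.aemeasurable (Filter.Eventually.of_forall fun ω => measure_lt_top _ _),
      lintegral_volume_freeSet S hR hR2.le, ENNReal.toReal_ofReal hq0.le]
  have hE2 : ∫ ω, (X ^ 2) ω ∂law n ≤ q ^ 2 + (4 * R) ^ 2 := by
    have : ∀ ω, (X ^ 2) ω = (volume (freeSet S R ω) ^ 2).toReal := by
      intro ω; simp [hX]
    simp only [this]
    rw [integral_toReal (hmeas.pow_const 2).aemeasurable
      (Filter.Eventually.of_forall fun ω => ENNReal.pow_lt_top (measure_lt_top _ _))]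
    exact ENNReal.toReal_le_of_le_ofReal (by positivity)
      (lintegral_sq_volume_freeSet_le S hR hR2.le)
  have hV := ProbabilityTheory.meas_ge_le_variance_div_sq hmem (c := q / 2) (by positivity)
  rw [ProbabilityTheory.variance_eq_sub hmem, hE] at hV
  refine (measure_mono ?_).trans (hV.trans ?_)
  · intro ω hω
    have h1 : X ω < q / 2 := (ENNReal.lt_ofReal_iff_toReal_lt (measure_ne_top _ _)).1 hω
    simp only [Set.mem_ofPred_eq]
    rw [abs_of_nonpos (by linarith)]
    linarith
  · gcongr
    linarith

/-- The points with index in `G` are independent of the free set of the points with index in `S`,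
hence unlikely to miss it altogether when it is large. -/
lemma law_miss_freeSet_le {n : ℕ} {S G : Finset (Fin n)} (hSG : Disjoint S G) (R : ℝ) {t : ℝ}
    (ht : 0 ≤ t) :
    law n {ω | ENNReal.ofReal t ≤ volume (freeSet S R ω) ∧ ∀ i ∈ G, ω i ∉ freeSet S R ω} ≤
      ENNReal.ofReal (1 - t) ^ G.card := by
  have hm : MeasurableSet {ω : Fin n → T2 | ENNReal.ofReal t ≤ volume (freeSet S R ω) ∧
      ∀ i ∈ G, ω i ∉ freeSet S R ω} := by
    refine MeasurableSet.inter (measurableSet_le measurable_const (measurable_volume_freeSet S R)) ?_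
    refine measurableSet_forall fun i => measurableSet_imp fun _ => MeasurableSet.compl ?_
    exact (measurableSet_freeSet_graph S R).preimage
        (f := fun ω : Fin n → T2 => (ω, ω i)) (by fun_prop)
  rw [← lintegral_indicator_one hm]
  have : ENNReal.ofReal (1 - t) ^ G.card =
      ∫⁻ _ : Fin n → T2, ENNReal.ofReal (1 - t) ^ G.card ∂law n := by simp
  rw [this]
  refine lintegral_le_of_lmarginal_le G (measurable_one.indicator hm) measurable_const ?_
  intro ω
  simp only [lmarginal]
  have hfree : ∀ y : G → T2, freeSet S R (Function.updateFinset ω G y) = freeSet S R ω := by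
    intro y
    ext x
    refine forall₂_congr fun j hj => ?_
    rw [Function.updateFinset_def]
    simp [Finset.disjoint_left.1 hSG hj]
  rw [lintegral_const, measure_univ, mul_one]
  by_cases h : ENNReal.ofReal t ≤ volume (freeSet S R ω)
  · have hc : volume (freeSet S R ω)ᶜ ≤ ENNReal.ofReal (1 - t) := by
      rw [prob_compl_eq_one_sub (measurableSet_freeSet S R ω), ENNReal.ofReal_sub _ ht,
        ENNReal.ofReal_one]
      gcongr
    have e : ∀ y : G → T2, {ω : Fin n → T2 | ENNReal.ofReal t ≤ volume (freeSet S R ω) ∧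
        ∀ i ∈ G, ω i ∉ freeSet S R ω}.indicator (1 : (Fin n → T2) → ENNReal)
          (Function.updateFinset ω G y) =
        (Set.univ.pi fun _ : G => (freeSet S R ω)ᶜ).indicator 1 y := by
      intro y
      simp only [Set.indicator_apply, Set.mem_ofPred_eq, hfree, h, true_and, Set.mem_pi,
        Set.mem_univ, true_imp_iff, Set.mem_compl_iff]
      congr 1
      apply propext
      constructor
      · intro H i
        have := H i i.2
        rw [Function.updateFinset_def] at this
        simpa using this
      · intro H i hi
        rw [Function.updateFinset_def]
        simpa [hi] using H ⟨i, hi⟩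
    simp only [e]
    rw [lintegral_indicator_one
      (MeasurableSet.univ_pi fun _ => (measurableSet_freeSet S R ω).compl), Measure.pi_pi]
    calc ∏ _i : G, volume (freeSet S R ω)ᶜ ≤ ∏ _i : G, ENNReal.ofReal (1 - t) :=
          Finset.prod_le_prod' fun _ _ => hc
      _ = _ := by simp
  · simp [hfree, h]

lemma law_exists_close_le {n : ℕ} (G : Finset (Fin n)) {R : ℝ} (hR : 0 ≤ R) :
    law n {ω | ∃ i ∈ G, ∃ j ∈ G, i ≠ j ∧ dist (ω j) (ω i) ≤ R} ≤
      (G.card : ENNReal) ^ 2 * ENNReal.ofReal ((2 * R) ^ 2) := by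
  have hsub : {ω : Fin n → T2 | ∃ i ∈ G, ∃ j ∈ G, i ≠ j ∧ dist (ω j) (ω i) ≤ R} ⊆
      ⋃ i ∈ G, ⋃ j ∈ G, {ω | i ≠ j ∧ dist (ω j) (ω i) ≤ R} := by
    rintro ω ⟨i, hi, j, hj, h⟩
    simp only [Set.mem_iUnion]
    exact ⟨i, hi, j, hj, h⟩
  have h1 : ∀ i j : Fin n, law n {ω | i ≠ j ∧ dist (ω j) (ω i) ≤ R} ≤
      ENNReal.ofReal ((2 * R) ^ 2) := by
    intro i j
    by_cases hij : i = j
    · simp [hij]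
    · have := law_inter_close_le hij MeasurableSet.univ (by simp) hR
      simpa [hij] using this
  calc _ ≤ _ := measure_mono hsub
    _ ≤ ∑ i ∈ G, law n (⋃ j ∈ G, {ω | i ≠ j ∧ dist (ω j) (ω i) ≤ R}) :=
      measure_biUnion_finset_le _ _
    _ ≤ ∑ i ∈ G, ∑ j ∈ G, law n {ω | i ≠ j ∧ dist (ω j) (ω i) ≤ R} :=
      Finset.sum_le_sum fun i _ => measure_biUnion_finset_le _ _
    _ ≤ ∑ i ∈ G, ∑ j ∈ G, ENNReal.ofReal ((2 * R) ^ 2) :=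
      Finset.sum_le_sum fun i _ => Finset.sum_le_sum fun j _ => h1 i j
    _ = _ := by simp [sq, mul_assoc]

/-! ### All Voronoi cells are small -/

/-- The points of the `m × m` grid in the torus. -/
noncomputable def gridPoint {m : ℕ} (z : Fin m × Fin m) : T2 :=
  ((((z.1 : ℕ) / (m : ℝ) : ℝ) : AddCircle (1 : ℝ)),
    (((z.2 : ℕ) / (m : ℝ) : ℝ) : AddCircle (1 : ℝ)))

lemma exists_gridPoint_near (x : T2) {m : ℕ} (hm : 0 < m) :
    ∃ z : Fin m × Fin m, dist x (gridPoint z) ≤ 1 / m := by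
  obtain ⟨a, ha⟩ := exists_grid_circle x.1 hm
  obtain ⟨b, hb⟩ := exists_grid_circle x.2 hm
  exact ⟨(a, b), by rw [Prod.dist_eq]; exact max_le ha hb⟩

lemma law_grid_missed_le (n m : ℕ) {r : ℝ} (hr : 0 ≤ r) (hr2 : r ≤ 1 / 2) :
    law n {ω | ∃ z : Fin m × Fin m, ∀ j, r < dist (ω j) (gridPoint z)} ≤
      (m : ENNReal) ^ 2 * ENNReal.ofReal (1 - (2 * r) ^ 2) ^ n := by
  have hsub : {ω : Fin n → T2 | ∃ z : Fin m × Fin m, ∀ j, r < dist (ω j) (gridPoint z)} ⊆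
      ⋃ z : Fin m × Fin m, {ω | ∀ j ∈ (Finset.univ : Finset (Fin n)),
        ω j ∈ {y | r < dist y (gridPoint z)}} := by
    rintro ω ⟨z, hz⟩
    simp only [Set.mem_iUnion]
    exact ⟨z, fun j _ => hz j⟩
  refine (measure_mono hsub).trans ((measure_iUnion_fintype_le _ _).trans ?_)
  simp only [law_forall_mem, volume_far hr hr2]
  simp [sq]

/-- If every grid point has a site within `r`, every point of the torus has a site within `2 * r`
in the sup-distance, so every Voronoi cell lies in a sup-ball of radius `4 * r`. -/
lemma volume_vor_le {n m : ℕ} (hm : 0 < m) {r : ℝ} (hmr : 1 / (m : ℝ) ≤ r) {ω : Fin n → T2}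
    (h : ∀ z : Fin m × Fin m, ∃ j, dist (ω j) (gridPoint z) ≤ r) (i : Fin n) :
    volume (vor (ω i) (Set.range ω)) ≤ ENNReal.ofReal (64 * r ^ 2) := by
  have hr : 0 ≤ r := le_trans (by positivity) hmr
  have hsub : vor (ω i) (Set.range ω) ⊆ closedBall (ω i) (4 * r) := by
    intro x hx
    obtain ⟨z, hz⟩ := exists_gridPoint_near x hm
    obtain ⟨j, hj⟩ := h z
    have h1 : dist x (ω j) ≤ 2 * r := by
      have := dist_triangle_right x (ω j) (gridPoint z)
      linarith
    have h2 := hx (ω j) ⟨j, rfl⟩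
    have h3 := dist_le_dT x (ω i)
    have h4 := dT_le_two_mul_dist x (ω j)
    rw [mem_closedBall]
    linarith
  refine (measure_mono hsub).trans ((volume_closedBall_T2_le _ (by positivity)).trans_eq ?_)
  congr 1
  ring

/-! ### The selected point -/

/-- The point with index `i` is acceptable to the player. -/
def Good {n : ℕ} (f : ℕ) (R : ℝ) (ω : Fin n → T2) (i : Fin n) : Prop :=
  n - f ≤ (i : ℕ) ∧ ∀ j : Fin n, j < i → R < dT (ω j) (ω i)

/-- The point with index `i` is the first one acceptable to the player. -/
def First {n : ℕ} (f : ℕ) (R : ℝ) (ω : Fin n → T2) (i : Fin n) : Prop :=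
  Good f R ω i ∧ ∀ k < i, ¬ Good f R ω k

lemma exists_first_selPoint {n f : ℕ} {R : ℝ} {ω : Fin n → T2} (h : ∃ i, Good f R ω i) :
    ∃ i, First f R ω i ∧ selPoint n f R ω = ω i := by
  have hne : (Finset.univ.filter fun i : Fin n =>
      n - f ≤ (i : ℕ) ∧ ∀ j : Fin n, j < i → R < dT (ω j) (ω i)).Nonempty := by
    obtain ⟨i, hi⟩ := h
    exact ⟨i, Finset.mem_filter.2 ⟨Finset.mem_univ _, hi⟩⟩
  refine ⟨_, ⟨(Finset.mem_filter.1 (Finset.min'_mem _ hne)).2, fun k hk hg => ?_⟩, ?_⟩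
  · have hmem : k ∈ Finset.univ.filter fun i : Fin n =>
        n - f ≤ (i : ℕ) ∧ ∀ j : Fin n, j < i → R < dT (ω j) (ω i) :=
      Finset.mem_filter.2 ⟨Finset.mem_univ _, hg⟩
    exact absurd (Finset.min'_le _ k hmem) (not_le.2 hk)
  · rw [selPoint, dif_pos hne]

lemma measurableSet_good {n : ℕ} (f : ℕ) (R : ℝ) (i : Fin n) :
    MeasurableSet {ω : Fin n → T2 | Good f R ω i} := by
  refine MeasurableSet.inter (MeasurableSet.const _) ?_
  refine measurableSet_forall fun j => measurableSet_imp fun _ => ?_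
  exact measurableSet_lt measurable_const (measurable_dT_coord j i)

lemma measurableSet_first {n : ℕ} (f : ℕ) (R : ℝ) (i : Fin n) :
    MeasurableSet {ω : Fin n → T2 | First f R ω i} := by
  refine MeasurableSet.inter (measurableSet_good f R i) ?_
  refine measurableSet_forall fun j => measurableSet_imp fun _ => ?_
  exact (measurableSet_good f R j).compl

lemma good_update {n : ℕ} {f : ℕ} {R : ℝ} {i j : Fin n} (hij : i < j) (ω : Fin n → T2) (y : T2) :
    Good f R (Function.update ω j y) i ↔ Good f R ω i := by
  unfold Good
  refine and_congr Iff.rfl (forall₂_congr fun k hk => ?_)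
  rw [Function.update_of_ne hij.ne, Function.update_of_ne (hk.trans hij).ne]

lemma first_update {n : ℕ} {f : ℕ} {R : ℝ} {i j : Fin n} (hij : i < j) (ω : Fin n → T2) (y : T2) :
    First f R (Function.update ω j y) i ↔ First f R ω i := by
  unfold First
  exact and_congr (good_update hij ω y)
    (forall₂_congr fun k hk => not_congr (good_update (hk.trans hij) ω y))

/-- At most `f` points arrive after the selected one, and the selection does not depend on them. -/
lemma law_first_spoiled_le {n : ℕ} (f : ℕ) {R : ℝ} (hR : 0 ≤ R) :
    law n {ω | ∃ i j, First f R ω i ∧ i < j ∧ dist (ω j) (ω i) ≤ R} ≤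
      (f : ENNReal) * ENNReal.ofReal ((2 * R) ^ 2) := by
  set J : Finset (Fin n) := Finset.univ.filter fun j => n - f ≤ (j : ℕ) with hJ
  have hJcard : J.card ≤ f := by
    have h1 : (J.map Fin.valEmbedding) ⊆ Finset.Ico (n - f) n := by
      intro k hk
      obtain ⟨j, hj, rfl⟩ := Finset.mem_map.1 hk
      exact Finset.mem_Ico.2 ⟨(Finset.mem_filter.1 hj).2, j.2⟩
    have h2 := Finset.card_le_card h1
    rw [Finset.card_map, Nat.card_Ico] at h2
    omega
  have hsub : {ω : Fin n → T2 | ∃ i j, First f R ω i ∧ i < j ∧ dist (ω j) (ω i) ≤ R} ⊆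
      ⋃ i : Fin n, ⋃ j ∈ J, {ω | i < j ∧ First f R ω i ∧ dist (ω j) (ω i) ≤ R} := by
    rintro ω ⟨i, j, hf, hij, hd⟩
    simp only [Set.mem_iUnion]
    refine ⟨i, j, Finset.mem_filter.2 ⟨Finset.mem_univ _, hf.1.1.trans ?_⟩, hij, hf, hd⟩
    exact hij.le
  have h1 : ∀ i j : Fin n, law n {ω | i < j ∧ First f R ω i ∧ dist (ω j) (ω i) ≤ R} ≤
      ENNReal.ofReal ((2 * R) ^ 2) * law n {ω | First f R ω i} := by
    intro i j
    by_cases hij : i < j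
    · have := law_inter_close_le hij.ne (measurableSet_first f R i)
        (fun ω y => first_update hij ω y) hR
      refine (measure_mono ?_).trans this
      exact fun ω h => h.2
    · simp [hij]
  have hdisj : Pairwise (Function.onFun Disjoint fun i : Fin n => {ω | First f R ω i}) := by
    intro i k hik
    refine Set.disjoint_left.2 fun ω hi hk => ?_
    rcases lt_or_gt_of_ne hik with h | h
    · exact hk.2 i h hi.1
    · exact hi.2 k h hk.1
  have hsum : ∑ i : Fin n, law n {ω | First f R ω i} ≤ 1 := by
    rw [← tsum_fintype (L := .unconditional _), ← measure_iUnion hdisj (measurableSet_first f R)]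
    exact prob_le_one
  calc _ ≤ _ := measure_mono hsub
    _ ≤ ∑ i, law n (⋃ j ∈ J, {ω | i < j ∧ First f R ω i ∧ dist (ω j) (ω i) ≤ R}) :=
      measure_iUnion_fintype_le _ _
    _ ≤ ∑ i, ∑ j ∈ J, law n {ω | i < j ∧ First f R ω i ∧ dist (ω j) (ω i) ≤ R} :=
      Finset.sum_le_sum fun i _ => measure_biUnion_finset_le _ _
    _ ≤ ∑ i, ∑ j ∈ J, ENNReal.ofReal ((2 * R) ^ 2) * law n {ω | First f R ω i} :=
      Finset.sum_le_sum fun i _ => Finset.sum_le_sum fun j _ => h1 i j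
    _ = (J.card : ENNReal) * ENNReal.ofReal ((2 * R) ^ 2) *
          ∑ i : Fin n, law n {ω | First f R ω i} := by
      simp only [Finset.sum_const, nsmul_eq_mul, Finset.mul_sum, mul_assoc]
    _ ≤ (f : ENNReal) * ENNReal.ofReal ((2 * R) ^ 2) * 1 := by gcongr
    _ = _ := mul_one _

/-- The sup-ball of radius `R / 8` around the selected point is contained in its cell. -/
lemma le_volume_vor {n f : ℕ} {R : ℝ} (hR : 0 ≤ R) (hR2 : R ≤ 1) {ω : Fin n → T2} {i : Fin n}
    (hi : First f R ω i) (h : ∀ j, i < j → R < dist (ω j) (ω i)) :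
    ENNReal.ofReal ((R / 4) ^ 2) ≤ volume (vor (ω i) (Set.range ω)) := by
  have hsub : closedBall (ω i) (R / 8) ⊆ vor (ω i) (Set.range ω) := by
    rintro x hx _ ⟨j, rfl⟩
    rw [mem_closedBall] at hx
    have h1 := dT_le_two_mul_dist x (ω i)
    have h2 := dist_le_dT x (ω j)
    rcases lt_trichotomy j i with hj | rfl | hj
    · have h3 := hi.1.2 j hj
      have h4 := dT_le_two_mul_dist (ω j) (ω i)
      have h5 := dist_triangle_left (ω j) (ω i) x
      linarith
    · exact le_rfl
    · have h3 := h j hj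
      have h5 := dist_triangle_left (ω j) (ω i) x
      linarith
  refine le_trans (le_of_eq ?_) (measure_mono hsub)
  rw [volume_closedBall_T2 _ (by positivity) (by linarith)]
  congr 1
  ring

/-- The deterministic and probabilistic ingredients combined, for arbitrary values of the
parameters; `g` is the length of an initial segment of the last `f` points in which already an
acceptable point is found. -/
lemma law_success {n f g m : ℕ} {R r : ℝ} (hgf : g ≤ f) (hgn : g ≤ n) (hm : 0 < m)
    (hmr : 1 / (m : ℝ) ≤ r) (hr : r ≤ 1 / 2) (hR : 0 ≤ R) (hR2 : R < 1 / 2) :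
    1 - ((m : ENNReal) ^ 2 * ENNReal.ofReal (1 - (2 * r) ^ 2) ^ n
        + ENNReal.ofReal ((4 * R) ^ 2 / ((1 - (2 * R) ^ 2) ^ n / 2) ^ 2)
        + ENNReal.ofReal (1 - (1 - (2 * R) ^ 2) ^ n / 2) ^ g
        + (g : ENNReal) ^ 2 * ENNReal.ofReal ((2 * R) ^ 2)
        + (f : ENNReal) * ENNReal.ofReal ((2 * R) ^ 2)) ≤
      law n {ω | ENNReal.ofReal ((R / 4) ^ 2) ≤ volume (vor (selPoint n f R ω) (Set.range ω)) ∧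
        ∀ i, volume (vor (ω i) (Set.range ω)) ≤ ENNReal.ofReal (64 * r ^ 2)} := by
  have hr0 : 0 ≤ r := le_trans (by positivity) hmr
  set S : Finset (Fin n) := Finset.univ.filter fun j => (j : ℕ) < n - f with hS
  set G : Finset (Fin n) :=
    Finset.univ.filter fun j => n - f ≤ (j : ℕ) ∧ (j : ℕ) < n - f + g with hG
  have hSG : Disjoint S G := by
    refine Finset.disjoint_left.2 fun j hj hj' => ?_
    have h1 := (Finset.mem_filter.1 hj).2
    have h2 := (Finset.mem_filter.1 hj').2
    omega
  have hGcard : G.card = g := by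
    have h1 : G.map Fin.valEmbedding = Finset.Ico (n - f) (n - f + g) := by
      ext k
      simp only [hG, Finset.mem_map, Finset.mem_filter, Finset.mem_univ, true_and,
        Fin.valEmbedding_apply, Finset.mem_Ico]
      constructor
      · rintro ⟨j, hj, rfl⟩; exact hj
      · intro hk; exact ⟨⟨k, by omega⟩, hk, rfl⟩
    rw [← Finset.card_map Fin.valEmbedding, h1, Nat.card_Ico]
    omega
  have hScard : S.card ≤ n := by simpa using Finset.card_le_univ S
  have hb0 : 0 < 1 - (2 * R) ^ 2 := by nlinarith
  have hq : (1 - (2 * R) ^ 2) ^ n ≤ (1 - (2 * R) ^ 2) ^ S.card :=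
    pow_le_pow_of_le_one hb0.le (by nlinarith [sq_nonneg (2 * R)]) hScard
  have hq0 : 0 < (1 - (2 * R) ^ 2) ^ n := by positivity
  set good := {ω : Fin n → T2 | ENNReal.ofReal ((R / 4) ^ 2) ≤
      volume (vor (selPoint n f R ω) (Set.range ω)) ∧
        ∀ i, volume (vor (ω i) (Set.range ω)) ≤ ENNReal.ofReal (64 * r ^ 2)} with hgood
  set t := (1 - (2 * R) ^ 2) ^ S.card / 2 with ht
  set B1 := {ω : Fin n → T2 | ∃ z : Fin m × Fin m, ∀ j, r < dist (ω j) (gridPoint z)} with hB1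
  set B2 := {ω : Fin n → T2 | volume (freeSet S R ω) < ENNReal.ofReal t} with hB2
  set B3 := {ω : Fin n → T2 | ENNReal.ofReal t ≤ volume (freeSet S R ω) ∧
    ∀ i ∈ G, ω i ∉ freeSet S R ω} with hB3
  set B4 := {ω : Fin n → T2 | ∃ i ∈ G, ∃ j ∈ G, i ≠ j ∧ dist (ω j) (ω i) ≤ R} with hB4
  set B5 := {ω : Fin n → T2 | ∃ i j, First f R ω i ∧ i < j ∧ dist (ω j) (ω i) ≤ R} with hB5
  have hcover : (Set.univ : Set (Fin n → T2)) ⊆ good ∪ (B1 ∪ B2 ∪ B3 ∪ B4 ∪ B5) := by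
    intro ω _
    by_contra hcon
    simp only [Set.mem_union, not_or] at hcon
    obtain ⟨h0, ⟨⟨⟨h1, h2⟩, h3⟩, h4⟩, h5⟩ := hcon
    apply h0
    simp only [hB1, hB2, hB3, hB4, hB5, Set.mem_ofPred_eq] at h1 h2 h3 h4 h5
    push Not at h1 h2 h3 h4 h5
    obtain ⟨i, hiG, hi⟩ := h3 h2
    have hiG' := (Finset.mem_filter.1 hiG).2
    have hgi : Good f R ω i := by
      refine ⟨hiG'.1, fun j hj => ?_⟩
      refine lt_of_lt_of_le ?_ (dist_le_dT _ _)
      by_cases hjS : (j : ℕ) < n - f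
      · exact hi j (Finset.mem_filter.2 ⟨Finset.mem_univ _, hjS⟩)
      · refine h4 i hiG j (Finset.mem_filter.2 ⟨Finset.mem_univ _, by omega, ?_⟩) hj.ne'
        have : (j : ℕ) < i := hj
        omega
    obtain ⟨k, hk, hsel⟩ := exists_first_selPoint ⟨i, hgi⟩
    refine ⟨?_, volume_vor_le hm hmr h1⟩
    rw [hsel]
    exact le_volume_vor hR (by linarith) hk fun j hj => h5 k j hk hj
  have hone : (1 : ENNReal) ≤ law n good +
      (law n B1 + law n B2 + law n B3 + law n B4 + law n B5) := by
    rw [← measure_univ (μ := law n)]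
    refine (measure_mono hcover).trans ((measure_union_le _ _).trans ?_)
    gcongr
    refine (measure_union_le _ _).trans ?_
    gcongr
    refine (measure_union_le _ _).trans ?_
    gcongr
    refine (measure_union_le _ _).trans ?_
    gcongr
    exact measure_union_le _ _
  rw [tsub_le_iff_right]
  refine hone.trans ?_
  gcongr
  · exact law_grid_missed_le n m hr0 hr
  · refine (law_freeSet_small_le S hR hR2).trans ?_
    gcongr
  · refine (law_miss_freeSet_le hSG R (by positivity)).trans ?_
    rw [hGcard]
    gcongr
    rw [ht]
    gcongr
  · have := law_exists_close_le G hR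
    rwa [hGcard] at this
  · exact law_first_spoiled_le f hR

/-! ### Asymptotics -/

lemma exp_neg_two_mul_le_one_sub {x : ℝ} (hx : 0 ≤ x) (hx2 : x ≤ 1 / 2) :
    Real.exp (-(2 * x)) ≤ 1 - x := by
  have h0 : 0 < 1 - x := by linarith
  rw [← Real.le_log_iff_exp_le h0]
  refine le_trans ?_ (Real.one_sub_inv_le_log_of_pos h0)
  have : (1 - x)⁻¹ ≤ 1 + 2 * x := by
    rw [inv_le_iff_one_le_mul₀ h0]
    nlinarith
  linarith

set_option maxHeartbeats 1000000 in
/-- With `w = n ^ (1 / 8)` and `L = log n`, all powers of `n` that occur are integral powers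
of `w`. -/
lemma law_success_asymptotic {n : ℕ} (hn : 256 ≤ n) :
    1 - ENNReal.ofReal (8 * Real.log n ^ 2 / Real.sqrt n) ≤
      law n {ω | ENNReal.ofReal (1 / 1024 * Real.log n / n) ≤
          volume (vor (selPoint n ⌈1 * Real.sqrt n * Real.log n⌉₊
            (1 / 8 * Real.sqrt (Real.log n / n)) ω) (Set.range ω)) ∧
        ∀ i, volume (vor (ω i) (Set.range ω)) ≤ ENNReal.ofReal (64 * Real.log n / n)} := by
  have hnR : (256 : ℝ) ≤ n := by exact_mod_cast hn
  have hn0 : (0 : ℝ) < n := by linarith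
  set L := Real.log n with hL
  set w := Real.exp (L / 8) with hw
  have hw0 : 0 < w := Real.exp_pos _
  have hw8 : w ^ 8 = n := by
    rw [hw, ← Real.exp_nat_mul]
    rw [show ((8 : ℕ) : ℝ) * (L / 8) = L by push_cast; ring, hL, Real.exp_log hn0]
  have hw4 : Real.sqrt n = w ^ 4 := by
    rw [← hw8, show w ^ 8 = (w ^ 4) ^ 2 by ring, Real.sqrt_sq (by positivity)]
  have hw2 : 2 ≤ w := by
    by_contra h
    push Not at h
    have : w ^ 8 < 2 ^ 8 := by gcongr
    rw [hw8] at this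
    linarith
  have hL1 : 1 ≤ L := by
    rw [hL, Real.le_log_iff_exp_le hn0]
    linarith [Real.exp_one_lt_d9]
  have hLw : L ≤ 8 * w := by
    have := Real.add_one_le_exp (L / 8)
    rw [← hw] at this
    linarith
  have hw7 : 128 * w ≤ w ^ 8 := by
    have : (2 : ℝ) ^ 7 ≤ w ^ 7 := by gcongr
    nlinarith
  have hLn : 4 * L ≤ n := by rw [← hw8]; linarith
  set r := Real.sqrt (L / n) with hr
  have hr2 : r ^ 2 = L / n := Real.sq_sqrt (by positivity)
  have hr0 : 0 < r := Real.sqrt_pos.2 (by positivity)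
  have hrhalf : r ≤ 1 / 2 := by
    apply Real.sqrt_le_iff.2 ⟨by norm_num, ?_⟩
    rw [div_le_iff₀ hn0]; linarith
  set R := 1 / 8 * r with hR
  set f := ⌈1 * Real.sqrt n * L⌉₊ with hf
  set g := ⌈w * L⌉₊ with hg
  set m := ⌈1 / r⌉₊ with hm
  have hm1 : 1 / r ≤ m := Nat.le_ceil _
  have hm0 : 0 < m := Nat.ceil_pos.2 (by positivity)
  have hm0' : (0 : ℝ) < m := by exact_mod_cast hm0
  have hmr : 1 / (m : ℝ) ≤ r := by
    rw [div_le_iff₀ hm0']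
    rwa [div_le_iff₀ hr0, mul_comm] at hm1
  have hwL : 1 ≤ w * L := by nlinarith
  have hw4w : w ≤ w ^ 4 := by
    have := pow_le_pow_right₀ (by linarith : 1 ≤ w) (show 1 ≤ 4 by norm_num)
    simpa using this
  have hgf : g ≤ f := by
    apply Nat.ceil_le_ceil
    rw [hw4, one_mul]
    gcongr
  have hgn : g ≤ n := by
    apply Nat.ceil_le.2
    rw [← hw8]
    have : (2 : ℝ) ^ 6 ≤ w ^ 6 := by gcongr
    nlinarith [sq_nonneg w]
  have hg2 : (g : ℝ) ≤ 2 * (w * L) := by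
    have := Nat.ceil_lt_add_one (by positivity : 0 ≤ w * L)
    linarith
  have hf2 : (f : ℝ) ≤ 2 * (w ^ 4 * L) := by
    have h1 : 1 ≤ w ^ 4 * L := by nlinarith
    have h2 := Nat.ceil_lt_add_one (by positivity : 0 ≤ 1 * Real.sqrt n * L)
    rw [hw4, one_mul] at h2
    rw [hf, hw4, one_mul]
    linarith
  have hmain := law_success hgf hgn hm0 hmr hrhalf (by positivity : 0 ≤ R) (by linarith)
  have e1 : (R / 4) ^ 2 = 1 / 1024 * L / n := by
    rw [hR, div_pow, mul_pow, hr2]; ring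
  have e2 : 64 * r ^ 2 = 64 * L / n := by rw [hr2]; ring
  rw [e1, e2] at hmain
  refine le_trans (tsub_le_tsub_left ?_ _) hmain
  -- The area of a ball of radius `R`, and the mean of the free area.
  have e3 : (2 * R) ^ 2 = L / (16 * n) := by
    rw [hR, mul_pow, mul_pow, hr2]; field_simp; norm_num
  have hx : L / (16 * n) ≤ 1 / 2 := by
    rw [div_le_iff₀ (by positivity)]; linarith
  set q := (1 - (2 * R) ^ 2) ^ n with hq
  have hqw : 1 / w ≤ q := by
    have h1 := exp_neg_two_mul_le_one_sub (x := L / (16 * n)) (by positivity) hx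
    calc 1 / w = Real.exp (-(2 * (L / (16 * n)))) ^ n := by
          rw [← Real.exp_nat_mul, hw, one_div, ← Real.exp_neg]
          congr 1
          field_simp
          norm_num
      _ ≤ q := by
          rw [hq, e3]
          gcongr
  have hq0 : 0 < q := lt_of_lt_of_le (by positivity) hqw
  have hq1 : q ≤ 1 := by
    rw [hq, e3]
    have : 0 ≤ L / (16 * n) := by positivity
    exact pow_le_one₀ (by linarith) (by linarith)
  have hD : 0 < w ^ 4 := by positivity
  have hLL : 1 ≤ L ^ 2 := by nlinarith
  have t1 : (m : ENNReal) ^ 2 * ENNReal.ofReal (1 - (2 * r) ^ 2) ^ n ≤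
      ENNReal.ofReal (4 * L ^ 2 / w ^ 4) := by
    have h0 : 0 ≤ 1 - (2 * r) ^ 2 := by nlinarith
    rw [← ENNReal.ofReal_natCast, ← ENNReal.ofReal_pow (by positivity), ← ENNReal.ofReal_pow h0,
      ← ENNReal.ofReal_mul (by positivity)]
    apply ENNReal.ofReal_le_ofReal
    have h1 : (m : ℝ) ≤ 2 / r := by
      have h2 := Nat.ceil_lt_add_one (by positivity : 0 ≤ 1 / r)
      have h3 : 1 ≤ 1 / r := by rw [le_div_iff₀ hr0]; linarith
      have h4 : 2 / r = 1 / r + 1 / r := by ring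
      rw [h4]
      linarith
    have h2 : (m : ℝ) ^ 2 ≤ 4 * w ^ 8 := by
      calc (m : ℝ) ^ 2 ≤ (2 / r) ^ 2 := by gcongr
        _ = 4 * n / L := by rw [div_pow, hr2]; field_simp; norm_num
        _ ≤ 4 * n := by apply div_le_self (by positivity) hL1
        _ = _ := by rw [hw8]
    have h3 : (1 - (2 * r) ^ 2) ^ n ≤ 1 / w ^ 32 := by
      calc (1 - (2 * r) ^ 2) ^ n ≤ Real.exp (-(2 * r) ^ 2) ^ n := by
            gcongr
            exact Real.one_sub_le_exp_neg _
        _ = 1 / w ^ 32 := by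
            rw [← Real.exp_nat_mul, hw, ← Real.exp_nat_mul, one_div, ← Real.exp_neg, mul_pow, hr2]
            congr 1
            field_simp
            norm_num
    calc (m : ℝ) ^ 2 * (1 - (2 * r) ^ 2) ^ n ≤ 4 * w ^ 8 * (1 / w ^ 32) := by gcongr
      _ = 4 * 1 / w ^ 24 := by field_simp
      _ ≤ 4 * L ^ 2 / w ^ 4 := by
        gcongr
        · linarith
        · norm_num
  have t2 : ENNReal.ofReal ((4 * R) ^ 2 / (q / 2) ^ 2) ≤ ENNReal.ofReal (L ^ 2 / w ^ 4) := by
    apply ENNReal.ofReal_le_ofReal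
    have e4 : (4 * R) ^ 2 = L / (4 * w ^ 8) := by
      rw [hR, mul_pow, mul_pow, hr2, hw8]; field_simp; norm_num
    calc (4 * R) ^ 2 / (q / 2) ^ 2 ≤ (4 * R) ^ 2 / (1 / w / 2) ^ 2 := by gcongr
      _ = L / w ^ 6 := by rw [e4]; field_simp; norm_num
      _ ≤ L ^ 2 / w ^ 4 := by
        gcongr
        · nlinarith
        · linarith
        · norm_num
  have t3 : ENNReal.ofReal (1 - q / 2) ^ g ≤ ENNReal.ofReal (L ^ 2 / w ^ 4) := by
    rw [← ENNReal.ofReal_pow (by linarith)]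
    apply ENNReal.ofReal_le_ofReal
    calc (1 - q / 2) ^ g ≤ Real.exp (-(q / 2)) ^ g := by
          gcongr
          · linarith
          · exact Real.one_sub_le_exp_neg _
      _ = Real.exp (-(g * q / 2)) := by rw [← Real.exp_nat_mul]; congr 1; ring
      _ ≤ Real.exp (-(w * L * (1 / w) / 2)) := by
          gcongr
          exact Nat.le_ceil _
      _ = 1 / w ^ 4 := by
          rw [show w * L * (1 / w) / 2 = 4 * (L / 8) by field_simp; norm_num, hw,
            ← Real.exp_nat_mul, one_div, ← Real.exp_neg]
          norm_num
      _ ≤ L ^ 2 / w ^ 4 := by gcongr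
  have t4 : (g : ENNReal) ^ 2 * ENNReal.ofReal ((2 * R) ^ 2) ≤ ENNReal.ofReal (L ^ 2 / w ^ 4) := by
    rw [← ENNReal.ofReal_natCast, ← ENNReal.ofReal_pow (by positivity),
      ← ENNReal.ofReal_mul (by positivity)]
    apply ENNReal.ofReal_le_ofReal
    rw [e3, ← hw8]
    calc (g : ℝ) ^ 2 * (L / (16 * w ^ 8)) ≤ (2 * (w * L)) ^ 2 * (L / (16 * w ^ 8)) := by gcongr
      _ = L ^ 2 * (L / (4 * w ^ 2)) / w ^ 4 := by field_simp; norm_num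
      _ ≤ L ^ 2 * 1 / w ^ 4 := by
        gcongr
        rw [div_le_one (by positivity)]
        nlinarith
      _ = _ := by rw [mul_one]
  have t5 : (f : ENNReal) * ENNReal.ofReal ((2 * R) ^ 2) ≤ ENNReal.ofReal (L ^ 2 / w ^ 4) := by
    rw [← ENNReal.ofReal_natCast, ← ENNReal.ofReal_mul (by positivity)]
    apply ENNReal.ofReal_le_ofReal
    rw [e3, ← hw8]
    calc (f : ℝ) * (L / (16 * w ^ 8)) ≤ 2 * (w ^ 4 * L) * (L / (16 * w ^ 8)) := by gcongr
      _ = L ^ 2 / w ^ 4 / 8 := by field_simp; norm_num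
      _ ≤ L ^ 2 / w ^ 4 := div_le_self (by positivity) (by norm_num)
  have p1 : 0 ≤ 4 * L ^ 2 / w ^ 4 := by positivity
  have p2 : 0 ≤ L ^ 2 / w ^ 4 := by positivity
  calc _ ≤ ENNReal.ofReal (4 * L ^ 2 / w ^ 4) + ENNReal.ofReal (L ^ 2 / w ^ 4) +
        ENNReal.ofReal (L ^ 2 / w ^ 4) + ENNReal.ofReal (L ^ 2 / w ^ 4) +
        ENNReal.ofReal (L ^ 2 / w ^ 4) := by gcongr
    _ = ENNReal.ofReal (8 * L ^ 2 / Real.sqrt n) := by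
      rw [← ENNReal.ofReal_add p1 p2, ← ENNReal.ofReal_add (by positivity) p2,
        ← ENNReal.ofReal_add (by positivity) p2, ← ENNReal.ofReal_add (by positivity) p2, hw4]
      congr 1
      ring

/-- There are constants `c, c₁, a, b, K > 0` such that for all sufficiently large `n`:
for `n` points chosen independently and uniformly from the flat unit torus, with
`f = ⌈c √n log n⌉` and `R = c₁ √((log n)/n)`, with probability at least
`1 - K (log² n)/√n`, the Voronoi cell of the point selected by the player's online strategy
has area at least `a (log n)/n`, while every Voronoi cell has area at most `b (log n)/n`;
so the strategy is `O(1)`-competitive against the prophet. -/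
theorem stmt_15 :
    ∃ c c₁ a b K : ℝ, 0 < c ∧ 0 < c₁ ∧ 0 < a ∧ 0 < b ∧ 0 < K ∧
      ∃ n₀ : ℕ, ∀ n : ℕ, n₀ ≤ n →
        1 - ENNReal.ofReal (K * (Real.log n) ^ 2 / Real.sqrt n) ≤
          (Measure.pi fun _ : Fin n => (volume : Measure T2))
            {ω : Fin n → T2 |
              ENNReal.ofReal (a * Real.log n / n) ≤
                volume (vor (selPoint n ⌈c * Real.sqrt n * Real.log n⌉₊
                    (c₁ * Real.sqrt (Real.log n / n)) ω) (Set.range ω)) ∧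
              ∀ i : Fin n,
                volume (vor (ω i) (Set.range ω)) ≤
                  ENNReal.ofReal (b * Real.log n / n)} := by
  exact ⟨1, 1 / 8, 1 / 1024, 64, 8, by norm_num, by norm_num, by norm_num, by norm_num,
    by norm_num, 256, fun n hn => law_success_asymptotic hn⟩
end
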